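/- For a pure bipartite state |ψ⟩ = Σ_{n≥1} μ_n |nn⟩ with Schmidt coefficients μ_n ≥ 0, the generalized robustness of entanglement equals (Σ_{n≥1} μ_n)². In particular it is finite if and only if the Schmidt coefficients are summable. -/

import Mathlib

noncomputable section
open scoped ENNReal ComplexOrder
open Filter

variable {H : Type} [NormedAddCommGroup H] [InnerProductSpace ℂ H] [CompleteSpace H]

local notation "⟪" x ", " y "⟫" => @inner ℂ _ _ x y

/-- Bounded operators on `H`. -/
abbrev Op (H : Type) [NormedAddCommGroup H] [InnerProductSpace ℂ H] : Type := H →L[ℂ] H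

/-- The rank-one projector `|ψ⟩⟨ψ|`. -/
def projv (ψ : H) : Op H := (innerSL ℂ ψ).smulRight ψ

/-- The trace of an operator with respect to a Hilbert basis. -/
def trB {ι : Type} (e : HilbertBasis ι ℂ H) (T : Op H) : ℂ := ∑' n, ⟪e n, T (e n)⟫

/-- A density operator: positive, trace-class (summable diagonal), unit trace. -/
def IsDensity {ι : Type} (e : HilbertBasis ι ℂ H) (ρ : Op H) : Prop :=
  ρ.IsPositive ∧ Summable (fun n => (⟪e n, ρ (e n)⟫).re) ∧ trB e ρ = 1

/-- The trace norm `Tr |T| = Tr √(T†T)`. -/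
def traceNorm {ι : Type} (e : HilbertBasis ι ℂ H) (T : Op H) : ℝ :=
  ∑' n, (⟪e n, (CFC.sqrt (ContinuousLinearMap.adjoint T ∘L T)) (e n)⟫).re

/-- Sequential closure of a set of operators in the trace norm. -/
def tnClosure {ι : Type} (e : HilbertBasis ι ℂ H) (S : Set (Op H)) : Set (Op H) :=
  {T | ∃ u : ℕ → Op H, (∀ k, u k ∈ S) ∧
    Tendsto (fun k => traceNorm e (u k - T)) atTop (nhds 0)}

/-- The generalized robustness `R_F(ρ) = inf {1 + λ | (ρ + λτ)/(1+λ) ∈ F, τ a density operator}`. -/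
def Robustness {ι : Type} (e : HilbertBasis ι ℂ H) (F : Set (Op H)) (ρ : Op H) : ℝ≥0∞ :=
  sInf {r : ℝ≥0∞ | ∃ lam : ℝ, 0 ≤ lam ∧ ∃ τ : Op H, IsDensity e τ ∧
    ((1 + lam)⁻¹ : ℝ) • (ρ + lam • τ) ∈ F ∧ r = ENNReal.ofReal (1 + lam)}

/-- A product vector with respect to the product basis `e : HilbertBasis (ℕ × ℕ)`. -/
def IsProductVec (e : HilbertBasis (ℕ × ℕ) ℂ H) (ψ : H) : Prop :=
  ∃ f g : ℕ → ℂ, ψ = ∑' q : ℕ × ℕ, (f q.1 * g q.2) • e q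

/-- The separable states: trace-norm closed convex hull of pure product state projectors. -/
def SepStates (e : HilbertBasis (ℕ × ℕ) ℂ H) : Set (Op H) :=
  tnClosure e (convexHull ℝ
    {T : Op H | ∃ ψ : H, ‖ψ‖ = 1 ∧ IsProductVec e ψ ∧ T = projv ψ})


section Aux

set_option linter.unusedSectionVars false

variable {ι : Type}

lemma parseval (e : HilbertBasis ι ℂ H) (x : H) :
    HasSum (fun i => ‖⟪e i, x⟫‖ ^ 2) (‖x‖ ^ 2) := by
  have h := e.hasSum_inner_mul_inner x x
  have h2 := (Complex.hasSum_re h)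
  have h3 : (⟪x, x⟫ : ℂ).re = ‖x‖ ^ 2 := by
    rw [inner_self_eq_norm_sq_to_K]; norm_cast
  rw [h3] at h2
  refine h2.congr_fun ?_ |> fun h => h
  intro i
  rw [← inner_conj_symm x (e i), Complex.conj_mul']
  norm_cast

lemma parseval_enn (e : HilbertBasis ι ℂ H) (x : H) :
    ∑' i, ENNReal.ofReal (‖⟪e i, x⟫‖ ^ 2) = ENNReal.ofReal (‖x‖ ^ 2) := by
  rw [← ENNReal.ofReal_tsum_of_nonneg (fun _ => by positivity) (parseval e x).summable,
    (parseval e x).tsum_eq]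

lemma hs_adjoint (e : HilbertBasis ι ℂ H) (B : Op H) :
    ∑' i, ENNReal.ofReal (‖B (e i)‖ ^ 2) =
      ∑' i, ENNReal.ofReal (‖(ContinuousLinearMap.adjoint B) (e i)‖ ^ 2) := by
  simp_rw [← parseval_enn e]
  rw [ENNReal.tsum_comm]
  refine tsum_congr fun i => tsum_congr fun j => ?_
  rw [ContinuousLinearMap.adjoint_inner_right, norm_inner_symm]

/-- Positive trace-class operator with trace `t`. -/
def IsTC (e : HilbertBasis ι ℂ H) (P : Op H) (t : ℝ) : Prop :=
  P.IsPositive ∧ HasSum (fun n => (⟪e n, P (e n)⟫).re) t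

lemma IsTC.add {e : HilbertBasis ι ℂ H} {P Q : Op H} {s t : ℝ} (hP : IsTC e P s)
    (hQ : IsTC e Q t) : IsTC e (P + Q) (s + t) := by
  refine ⟨hP.1.add hQ.1, ?_⟩
  simpa [inner_add_right] using hP.2.add hQ.2

lemma real_smul_apply (c : ℝ) (P : Op H) (x : H) : (c • P) x = (c : ℂ) • P x := by
  rw [smul_apply]; exact (Complex.coe_smul c _).symm

lemma real_smul_eq (c : ℝ) (P : Op H) : c • P = (c : ℂ) • P := by
  ext x; rw [real_smul_apply]; rfl

lemma IsTC.smul {e : HilbertBasis ι ℂ H} {P : Op H} {s : ℝ} (hP : IsTC e P s)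
    {c : ℝ} (hc : 0 ≤ c) : IsTC e (c • P) (c * s) := by
  refine ⟨?_, ?_⟩
  · rw [real_smul_eq]
    exact hP.1.smul_of_nonneg (by exact_mod_cast hc)
  · have := hP.2.mul_left c
    refine this.congr_fun ?_ |> fun h => h
    intro i
    rw [real_smul_apply, inner_smul_right, Complex.re_ofReal_mul]

lemma projv_apply (ψ x : H) : projv ψ x = ⟪ψ, x⟫ • ψ := by
  simp [projv]

lemma inner_projv (ψ x : H) : ⟪x, projv ψ x⟫ = ((‖⟪ψ, x⟫‖ ^ 2 : ℝ) : ℂ) := by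
  rw [projv_apply, inner_smul_right, ← inner_conj_symm x ψ, Complex.mul_conj']
  norm_cast

lemma projv_pos (ψ : H) : (projv ψ).IsPositive := by
  rw [ContinuousLinearMap.isPositive_iff_complex]
  intro x
  rw [← inner_conj_symm, inner_projv]
  rw [Complex.conj_ofReal]
  exact ⟨by rw [RCLike.re_to_complex, Complex.ofReal_re], by
    rw [RCLike.re_to_complex, Complex.ofReal_re]; positivity⟩

lemma projv_tc (e : HilbertBasis ι ℂ H) (ψ : H) : IsTC e (projv ψ) (‖ψ‖ ^ 2) := by
  refine ⟨projv_pos ψ, ?_⟩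
  refine (parseval e ψ).congr_fun ?_ |> fun h => h
  intro i
  rw [inner_projv, Complex.ofReal_re, norm_inner_symm]

lemma exists_sqrt {P : Op H} (hP : P.IsPositive) : ∃ S : Op H, ContinuousLinearMap.adjoint S = S ∧
    P = S ∘L S := by
  have h0 : 0 ≤ P := (ContinuousLinearMap.nonneg_iff_isPositive P).2 hP
  refine ⟨CFC.sqrt P, ?_, ?_⟩
  · exact (IsSelfAdjoint.of_nonneg (CFC.sqrt_nonneg P)).star_eq
  · exact (CFC.sqrt_mul_sqrt_self P h0).symm

lemma sqrt_norm_sq {P S : Op H} (hS : ContinuousLinearMap.adjoint S = S) (hP : P = S ∘L S)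
    (x : H) : (⟪x, P x⟫).re = ‖S x‖ ^ 2 := by
  have : ⟪x, P x⟫ = ⟪S x, S x⟫ := by
    rw [hP, ContinuousLinearMap.comp_apply, ← ContinuousLinearMap.adjoint_inner_left, hS]
  rw [this, inner_self_eq_norm_sq_to_K]; norm_cast

lemma tsum_sqrt {e : HilbertBasis ι ℂ H} {P S : Op H} {t : ℝ} (h : IsTC e P t)
    (hS : ContinuousLinearMap.adjoint S = S) (hP : P = S ∘L S) :
    ∑' i, ENNReal.ofReal (‖S (e i)‖ ^ 2) = ENNReal.ofReal t := by
  have h2 := h.2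
  simp_rw [sqrt_norm_sq hS hP] at h2
  rw [← ENNReal.ofReal_tsum_of_nonneg (fun _ => by positivity) h2.summable, h2.tsum_eq]

lemma IsTC.nonneg {e : HilbertBasis ι ℂ H} {P : Op H} {t : ℝ} (h : IsTC e P t) : 0 ≤ t :=
  h.2.nonneg fun i => by simpa using h.1.re_inner_nonneg_right (e i)

lemma sum_contr_le {e : HilbertBasis ι ℂ H} {P : Op H} {t : ℝ} (h : IsTC e P t)
    {g : Op H} (hg : ContinuousLinearMap.adjoint g = g) (hg1 : ‖g‖ ≤ 1) (F : Finset ι) :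
    |∑ i ∈ F, (⟪e i, P (g (e i))⟫).re| ≤ t := by
  obtain ⟨S, hS, hP⟩ := exists_sqrt h.1
  have key : ∑' i, ENNReal.ofReal (‖S (g (e i))‖ ^ 2) ≤ ENNReal.ofReal t := by
    have := hs_adjoint e (S ∘L g)
    rw [ContinuousLinearMap.adjoint_comp, hS, hg] at this
    simp only [ContinuousLinearMap.comp_apply] at this
    rw [this, ← tsum_sqrt h hS hP]
    refine ENNReal.tsum_le_tsum fun i => ENNReal.ofReal_le_ofReal ?_
    have := g.le_of_opNorm_le hg1 (S (e i))
    gcongr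
    simpa using this
  have b1 : ∑ i ∈ F, ‖S (g (e i))‖ ^ 2 ≤ t := by
    have := (ENNReal.sum_le_tsum F).trans key
    rw [← ENNReal.ofReal_sum_of_nonneg (fun _ _ => by positivity)] at this
    exact (ENNReal.ofReal_le_ofReal_iff h.nonneg).1 this
  have b2 : ∑ i ∈ F, ‖S (e i)‖ ^ 2 ≤ t := by
    have := (ENNReal.sum_le_tsum F).trans (tsum_sqrt h hS hP).le
    rw [← ENNReal.ofReal_sum_of_nonneg (fun _ _ => by positivity)] at this
    exact (ENNReal.ofReal_le_ofReal_iff h.nonneg).1 this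
  calc |∑ i ∈ F, (⟪e i, P (g (e i))⟫).re| ≤ ∑ i ∈ F, |(⟪e i, P (g (e i))⟫).re| :=
        Finset.abs_sum_le_sum_abs _ _
    _ ≤ ∑ i ∈ F, (‖S (e i)‖ ^ 2 + ‖S (g (e i))‖ ^ 2) / 2 := by
        refine Finset.sum_le_sum fun i _ => ?_
        have e1 : ⟪e i, P (g (e i))⟫ = ⟪S (e i), S (g (e i))⟫ := by
          rw [hP, ContinuousLinearMap.comp_apply, ← ContinuousLinearMap.adjoint_inner_left, hS]
        rw [e1]
        refine (Complex.abs_re_le_norm _).trans ((norm_inner_le_norm _ _).trans ?_)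
        nlinarith [sq_nonneg (‖S (e i)‖ - ‖S (g (e i))‖)]
    _ ≤ t := by
        rw [← Finset.sum_div, Finset.sum_add_distrib]; linarith

lemma sqrt_eq_abs (A : Op H) :
    CFC.sqrt (ContinuousLinearMap.adjoint A ∘L A) = CFC.abs A := rfl

lemma abs_approx {A : Op H} (hA : IsSelfAdjoint A) {ε : ℝ} (hε : 0 < ε) :
    ∃ g : Op H, ContinuousLinearMap.adjoint g = g ∧ ‖g‖ ≤ 1 ∧ ‖CFC.abs A - A ∘L g‖ ≤ ε := by
  have hc : Continuous (fun x : ℝ => x / (|x| + ε)) := by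
    refine continuous_id.div (by fun_prop) fun x => by positivity
  refine ⟨cfc (fun x : ℝ => x / (|x| + ε)) A, ?_, ?_, ?_⟩
  · exact (cfc_predicate (p := IsSelfAdjoint) _ A : IsSelfAdjoint _).star_eq
  · refine norm_cfc_le zero_le_one fun x _ => ?_
    rw [Real.norm_eq_abs, abs_div, abs_of_pos (by positivity : 0 < |x| + ε),
      div_le_one (by positivity)]
    linarith
  · have : A ∘L cfc (fun x : ℝ => x / (|x| + ε)) A =
        cfc (fun x : ℝ => x * (x / (|x| + ε))) A := by
      rw [cfc_mul (fun x : ℝ => x) _ A (by fun_prop) hc.continuousOn, cfc_id' ℝ A]; rfl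
    rw [this, CFC.abs_eq_cfc_norm A hA, ← cfc_sub (fun x : ℝ => ‖x‖)
      (fun x : ℝ => x * (x / (|x| + ε))) A (by fun_prop) (continuous_id.mul hc).continuousOn]
    refine norm_cfc_le hε.le fun x _ => ?_
    have h1 : ‖x‖ - x * (x / (|x| + ε)) = ε * (|x| / (|x| + ε)) := by
      rw [Real.norm_eq_abs]
      have : |x| + ε ≠ 0 := by positivity
      field_simp
      rw [← sq_abs x]; ring
    rw [h1, Real.norm_eq_abs, abs_of_nonneg (by positivity)]
    have : |x| / (|x| + ε) ≤ 1 := by rw [div_le_one (by positivity)]; linarith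
    nlinarith

lemma abs_sub_tc {e : HilbertBasis ι ℂ H} {P Q : Op H} {s t : ℝ} (hP : IsTC e P s)
    (hQ : IsTC e Q t) : ∃ r, r ≤ s + t ∧ IsTC e (CFC.abs (P - Q)) r := by
  have hA : IsSelfAdjoint (P - Q) := hP.1.isSelfAdjoint.sub hQ.1.isSelfAdjoint
  have hpos : (CFC.abs (P - Q)).IsPositive :=
    (ContinuousLinearMap.nonneg_iff_isPositive _).1 (CFC.abs_nonneg _)
  have hnn : ∀ i, 0 ≤ (⟪e i, (CFC.abs (P - Q)) (e i)⟫).re := fun i => by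
    simpa using hpos.re_inner_nonneg_right (e i)
  have hb : ∀ F : Finset ι, ∑ i ∈ F, (⟪e i, (CFC.abs (P - Q)) (e i)⟫).re ≤ s + t := by
    intro F
    have hε : ∀ ε : ℝ, 0 < ε →
        ∑ i ∈ F, (⟪e i, (CFC.abs (P - Q)) (e i)⟫).re ≤ s + t + F.card * ε := by
      intro ε hε
      obtain ⟨g, hg, hg1, hgA⟩ := abs_approx hA hε
      have h1 := sum_contr_le hP hg hg1 F
      have h2 := sum_contr_le hQ hg hg1 F
      have h3 : ∑ i ∈ F, (⟪e i, (CFC.abs (P - Q) - (P - Q) ∘L g) (e i)⟫).re ≤ F.card * ε := by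
        rw [← nsmul_eq_mul]
        refine Finset.sum_le_card_nsmul _ _ _ fun i _ => ?_
        refine (Complex.re_le_norm _).trans ((norm_inner_le_norm _ _).trans ?_)
        have := (CFC.abs (P - Q) - (P - Q) ∘L g).le_of_opNorm_le hgA (e i)
        rw [e.orthonormal.1 i] at *
        simpa using this
      have h4 : ∑ i ∈ F, (⟪e i, (CFC.abs (P - Q)) (e i)⟫).re =
          ∑ i ∈ F, (⟪e i, (CFC.abs (P - Q) - (P - Q) ∘L g) (e i)⟫).re +
          (∑ i ∈ F, (⟪e i, P (g (e i))⟫).re - ∑ i ∈ F, (⟪e i, Q (g (e i))⟫).re) := by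
        rw [← Finset.sum_sub_distrib, ← Finset.sum_add_distrib]
        refine Finset.sum_congr rfl fun i _ => ?_
        simp [inner_sub_right]
      rw [abs_le] at h1 h2
      linarith
    refine le_of_forall_pos_le_add fun δ hδ => ?_
    have := hε (δ / (F.card + 1)) (by positivity)
    have h5 : (F.card : ℝ) * (δ / (F.card + 1)) ≤ δ := by
      rw [← mul_div_assoc, div_le_iff₀ (by positivity)]; nlinarith
    linarith
  have hs : Summable fun i => (⟪e i, (CFC.abs (P - Q)) (e i)⟫).re :=
    summable_of_sum_le hnn hb
  exact ⟨_, hs.tsum_le_of_sum_le hb, hpos, hs.hasSum⟩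

lemma traceNorm_sub_le {e : HilbertBasis ι ℂ H} {P Q : Op H} {s t : ℝ} (hP : IsTC e P s)
    (hQ : IsTC e Q t) : traceNorm e (P - Q) ≤ s + t := by
  obtain ⟨r, hr, h⟩ := abs_sub_tc hP hQ
  rw [traceNorm, sqrt_eq_abs, h.2.tsum_eq]
  exact hr

lemma traceNorm_nonneg (e : HilbertBasis ι ℂ H) (A : Op H) : 0 ≤ traceNorm e A := by
  rw [traceNorm, sqrt_eq_abs]
  refine tsum_nonneg fun i => ?_
  have hpos : (CFC.abs A).IsPositive :=
    (ContinuousLinearMap.nonneg_iff_isPositive _).1 (CFC.abs_nonneg _)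
  simpa using hpos.re_inner_nonneg_right (e i)

lemma norm_apply_le {e : HilbertBasis ι ℂ H} {P Q : Op H} {s t : ℝ} (hP : IsTC e P s)
    (hQ : IsTC e Q t) (x : H) : ‖(P - Q) x‖ ≤ traceNorm e (P - Q) * ‖x‖ := by
  obtain ⟨r, hr, h⟩ := abs_sub_tc hP hQ
  have hr' : traceNorm e (P - Q) = r := by rw [traceNorm, sqrt_eq_abs, h.2.tsum_eq]
  rw [hr']
  set A := P - Q
  obtain ⟨S, hS, hR⟩ := exists_sqrt h.1
  have hn : ‖A x‖ ^ 2 = ‖CFC.abs A x‖ ^ 2 := by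
    have h1 : ContinuousLinearMap.adjoint (CFC.abs A) = CFC.abs A := h.1.isSelfAdjoint.star_eq
    rw [← sqrt_norm_sq h1 rfl]
    have h2 : CFC.abs A ∘L CFC.abs A = ContinuousLinearMap.adjoint A ∘L A := CFC.abs_mul_abs A
    rw [h2, ContinuousLinearMap.comp_apply, ContinuousLinearMap.adjoint_inner_right,
      inner_self_eq_norm_sq_to_K]
    norm_cast
  have hSb : ∀ y, ‖S y‖ ^ 2 ≤ r * ‖y‖ ^ 2 := by
    intro y
    have h2 := h.2
    simp_rw [sqrt_norm_sq hS hR] at h2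
    refine hasSum_le (fun i => ?_) (parseval e (S y)) (h2.mul_right (‖y‖ ^ 2))
    rw [← mul_pow]
    gcongr
    rw [← ContinuousLinearMap.adjoint_inner_left, hS]
    exact norm_inner_le_norm _ _
  have h0 := h.nonneg
  have h3 : ‖A x‖ ^ 2 ≤ (r * ‖x‖) ^ 2 := by
    rw [hn, hR, ContinuousLinearMap.comp_apply]
    nlinarith [hSb (S x), hSb x, mul_le_mul_of_nonneg_left (hSb x) h0]
  exact le_of_sq_le_sq h3 (by positivity)

end Aux

section Lower

set_option linter.unusedSectionVars false

/-- The unnormalised maximally entangled vector on the first `N` levels. -/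
def phiv (e : HilbertBasis (ℕ × ℕ) ℂ H) (N : ℕ) : H := ∑ n ∈ Finset.range N, e (n, n)

lemma inner_basis (e : HilbertBasis (ℕ × ℕ) ℂ H) (p q : ℕ × ℕ) :
    ⟪e p, e q⟫ = if p = q then 1 else 0 := by
  classical
  exact orthonormal_iff_ite.1 e.orthonormal p q

lemma inner_of_hasSum {e : HilbertBasis (ℕ × ℕ) ℂ H} {c : ℕ × ℕ → ℂ} {x : H}
    (h : HasSum (fun q => c q • e q) x) (p : ℕ × ℕ) : ⟪e p, x⟫ = c p := by
  have h1 := h.mapL (innerSL ℂ (e p))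
  simp only [innerSL_apply_apply, inner_smul_right, inner_basis] at h1
  have h2 := hasSum_single (f := fun q => c q * (if p = q then (1 : ℂ) else 0)) p
    (fun q hq => by simp [hq.symm])
  simpa using h1.unique h2

lemma prod_inner_le {e : HilbertBasis (ℕ × ℕ) ℂ H} {ψ : H} (h1 : ‖ψ‖ = 1)
    (hψ : IsProductVec e ψ) (N : ℕ) : ‖⟪ψ, phiv e N⟫‖ ^ 2 ≤ 1 := by
  obtain ⟨f, g, hfg⟩ := hψ
  have hs : Summable (fun q : ℕ × ℕ => (f q.1 * g q.2) • e q) := by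
    by_contra hn
    rw [tsum_eq_zero_of_not_summable hn] at hfg
    rw [hfg] at h1; simp at h1
  have hsum : HasSum (fun q : ℕ × ℕ => (f q.1 * g q.2) • e q) ψ := hfg ▸ hs.hasSum
  have hc : ∀ q : ℕ × ℕ, ⟪e q, ψ⟫ = f q.1 * g q.2 := fun q =>
    inner_of_hasSum (c := fun q => f q.1 * g q.2) hsum q
  have hb := e.orthonormal.sum_inner_products_le (s := Finset.range N ×ˢ Finset.range N) ψ
  rw [h1, Finset.sum_product] at hb
  simp only [hc, norm_mul, mul_pow] at hb
  rw [norm_inner_symm, phiv, sum_inner]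
  simp only [hc]
  calc ‖∑ n ∈ Finset.range N, f n * g n‖ ^ 2
      ≤ (∑ n ∈ Finset.range N, ‖f n‖ * ‖g n‖) ^ 2 := by
        gcongr
        refine (norm_sum_le _ _).trans (le_of_eq ?_)
        simp
    _ ≤ (∑ n ∈ Finset.range N, ‖f n‖ ^ 2) * (∑ n ∈ Finset.range N, ‖g n‖ ^ 2) :=
        Finset.sum_mul_sq_le_sq_mul_sq _ _ _
    _ ≤ 1 := by
        rw [Finset.sum_mul_sum]; simpa using hb

lemma hull_prop (e : HilbertBasis (ℕ × ℕ) ℂ H) (N : ℕ) {T : Op H}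
    (hT : T ∈ convexHull ℝ
      {T : Op H | ∃ ψ : H, ‖ψ‖ = 1 ∧ IsProductVec e ψ ∧ T = projv ψ}) :
    (∃ t, IsTC e T t) ∧ (⟪phiv e N, T (phiv e N)⟫).re ≤ 1 := by
  refine convexHull_min (t := {T : Op H | (∃ t, IsTC e T t) ∧
    (⟪phiv e N, T (phiv e N)⟫).re ≤ 1}) ?_ ?_ hT
  · rintro _ ⟨ψ, h1, hψ, rfl⟩
    refine ⟨⟨_, projv_tc e ψ⟩, ?_⟩
    rw [inner_projv, Complex.ofReal_re]
    exact prod_inner_le h1 hψ N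
  · rintro A ⟨⟨s, hA⟩, hA1⟩ B ⟨⟨t, hB⟩, hB1⟩ a b ha hb hab
    refine ⟨⟨_, (hA.smul ha).add (hB.smul hb)⟩, ?_⟩
    rw [add_apply, real_smul_apply, real_smul_apply, inner_add_right,
      inner_smul_right, inner_smul_right, Complex.add_re, Complex.re_ofReal_mul,
      Complex.re_ofReal_mul]
    nlinarith

lemma sep_prop (e : HilbertBasis (ℕ × ℕ) ℂ H) (N : ℕ) {T : Op H} {t : ℝ} (hTC : IsTC e T t)
    (hT : T ∈ SepStates e) : (⟪phiv e N, T (phiv e N)⟫).re ≤ 1 := by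
  obtain ⟨u, hu, hlim⟩ := hT
  have hle : ∀ k, (⟪phiv e N, T (phiv e N)⟫).re ≤
      1 + traceNorm e (u k - T) * ‖phiv e N‖ ^ 2 := by
    intro k
    obtain ⟨⟨s, hs⟩, h1⟩ := hull_prop e N (hu k)
    have h2 := norm_apply_le hs hTC (phiv e N)
    have h3 : (⟪phiv e N, T (phiv e N)⟫).re = (⟪phiv e N, u k (phiv e N)⟫).re -
        (⟪phiv e N, (u k - T) (phiv e N)⟫).re := by
      rw [sub_apply, inner_sub_right, Complex.sub_re]; ring
    have h4 : -(⟪phiv e N, (u k - T) (phiv e N)⟫).re ≤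
        traceNorm e (u k - T) * ‖phiv e N‖ ^ 2 := by
      refine (neg_le_abs _).trans ((Complex.abs_re_le_norm _).trans
        ((norm_inner_le_norm _ _).trans ?_))
      nlinarith [norm_nonneg (phiv e N)]
    linarith
  have hl := (hlim.mul_const (‖phiv e N‖ ^ 2)).const_add 1
  simp only [zero_mul, add_zero] at hl
  exact ge_of_tendsto' hl hle

lemma summable_psi (e : HilbertBasis (ℕ × ℕ) ℂ H) {μ : ℕ → ℝ}
    (hsq : Summable (fun n => μ n ^ 2)) :
    Summable (fun n : ℕ => ((μ n : ℝ) : ℂ) • e (n, n)) := by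
  have ho : Orthonormal ℂ (fun n : ℕ => e (n, n)) :=
    e.orthonormal.comp (fun n : ℕ => (n, n)) fun a b h => by simpa using h
  have := (ho.orthogonalFamily.summable_iff_norm_sq_summable
    (f := fun n => ((μ n : ℝ) : ℂ))).2 (by simpa using hsq)
  simpa [LinearIsometry.toSpanSingleton_apply] using this

lemma inner_psi {e : HilbertBasis (ℕ × ℕ) ℂ H} {μ : ℕ → ℝ} {ψ : H}
    (h : HasSum (fun n : ℕ => ((μ n : ℝ) : ℂ) • e (n, n)) ψ) (n : ℕ) :
    ⟪e (n, n), ψ⟫ = (μ n : ℂ) := by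
  have h1 := h.mapL (innerSL ℂ (e (n, n)))
  simp only [innerSL_apply_apply, inner_smul_right, inner_basis] at h1
  have h2 := hasSum_single (f := fun m : ℕ => (μ m : ℂ) * (if (n, n) = (m, m) then (1 : ℂ) else 0)) n
    (fun q hq => by simp [hq.symm])
  simpa using h1.unique h2

lemma norm_psi {e : HilbertBasis (ℕ × ℕ) ℂ H} {μ : ℕ → ℝ} {ψ : H}
    (h : HasSum (fun n : ℕ => ((μ n : ℝ) : ℂ) • e (n, n)) ψ) :
    HasSum (fun n => μ n ^ 2) (‖ψ‖ ^ 2) := by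
  have h1 := Complex.hasSum_re (h.mapL (innerSL ℂ ψ))
  have h3 : (⟪ψ, ψ⟫ : ℂ).re = ‖ψ‖ ^ 2 := by
    rw [inner_self_eq_norm_sq_to_K]; norm_cast
  simp only [innerSL_apply_apply, inner_smul_right] at h1
  rw [h3] at h1
  refine h1.congr_fun ?_ |> fun h => h
  intro i
  rw [← inner_conj_symm ψ, inner_psi h, Complex.conj_ofReal, ← Complex.ofReal_mul,
    Complex.ofReal_re, sq]

lemma density_tc {e : HilbertBasis (ℕ × ℕ) ℂ H} {τ : Op H} (h : IsDensity e τ) :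
    ∃ t, IsTC e τ t := ⟨_, h.1, h.2.1.hasSum⟩

lemma lower_bound (e : HilbertBasis (ℕ × ℕ) ℂ H)
    (μ : ℕ → ℝ) (hμ : ∀ n, 0 ≤ μ n) (hsq : Summable (fun n => μ n ^ 2)) :
    (∑' n : ℕ, ENNReal.ofReal (μ n)) ^ 2 ≤
    Robustness e (SepStates e) (projv (∑' n : ℕ, ((μ n : ℝ) : ℂ) • e (n, n))) := by
  refine le_sInf ?_
  rintro _ ⟨lam, hlam, τ, hτ, hmem, rfl⟩
  have hψ := (summable_psi e hsq).hasSum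
  set ψ := ∑' n : ℕ, ((μ n : ℝ) : ℂ) • e (n, n)
  obtain ⟨t, ht⟩ := density_tc hτ
  have hTC := ((projv_tc e ψ).add (ht.smul hlam)).smul (inv_nonneg.2 (by linarith : 0 ≤ 1 + lam))
  have key : ∀ N, (∑ n ∈ Finset.range N, μ n) ^ 2 ≤ 1 + lam := by
    intro N
    have h := sep_prop e N hTC hmem
    rw [real_smul_apply, inner_smul_right, Complex.re_ofReal_mul, add_apply, inner_add_right,
      inner_projv, real_smul_apply, inner_smul_right, Complex.add_re, Complex.ofReal_re,
      Complex.re_ofReal_mul, inv_mul_le_iff₀ (by linarith)] at h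
    have h2 : ⟪phiv e N, ψ⟫ = ((∑ n ∈ Finset.range N, μ n : ℝ) : ℂ) := by
      rw [phiv, sum_inner]; simp [inner_psi hψ]
    have h3 : 0 ≤ (⟪phiv e N, τ (phiv e N)⟫).re := by
      simpa using ht.1.re_inner_nonneg_right (phiv e N)
    rw [norm_inner_symm, h2, Complex.norm_real, Real.norm_eq_abs, sq_abs] at h
    nlinarith [mul_nonneg hlam h3]
  have hlim := ((ENNReal.continuous_pow 2).tendsto _).comp
    (ENNReal.tendsto_nat_tsum (fun n => ENNReal.ofReal (μ n)))
  refine le_of_tendsto' hlim fun N => ?_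
  simp only [Function.comp]
  rw [← ENNReal.ofReal_sum_of_nonneg (fun n _ => hμ n),
    ← ENNReal.ofReal_pow (Finset.sum_nonneg fun n _ => hμ n)]
  exact ENNReal.ofReal_le_ofReal (key N)

end Lower

section Upper

set_option linter.unusedSectionVars false

lemma IsTC.density {e : HilbertBasis (ℕ × ℕ) ℂ H} {τ : Op H} (h : IsTC e τ 1) :
    IsDensity e τ := by
  refine ⟨h.1, h.2.summable, ?_⟩
  have h1 : ∀ n, ⟪e n, τ (e n)⟫ = (((⟪e n, τ (e n)⟫).re : ℝ) : ℂ) := fun n => by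
    have := (Complex.nonneg_iff.1 (h.1.inner_nonneg_right (e n))).2
    apply Complex.ext <;> simp [← this]
  rw [trB, tsum_congr h1, ← Complex.ofReal_tsum, h.2.tsum_eq, Complex.ofReal_one]

/-- The diagonal operator with eigenvalues `c q` in the basis `e`. -/
def Dg (e : HilbertBasis (ℕ × ℕ) ℂ H) (c : ℕ × ℕ → ℝ) : Op H := ∑' q, c q • projv (e q)

lemma norm_projv_basis (e : HilbertBasis (ℕ × ℕ) ℂ H) (q : ℕ × ℕ) : ‖projv (e q)‖ ≤ 1 := by
  refine ContinuousLinearMap.opNorm_le_bound _ zero_le_one fun x => ?_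
  rw [projv_apply, norm_smul, e.orthonormal.1 q, mul_one, one_mul]
  have := norm_inner_le_norm (𝕜 := ℂ) (e q) x
  rwa [e.orthonormal.1 q, one_mul] at this

lemma summable_Dg (e : HilbertBasis (ℕ × ℕ) ℂ H) {c : ℕ × ℕ → ℝ} (hc : ∀ q, 0 ≤ c q)
    (hs : Summable c) : Summable (fun q => c q • projv (e q)) := by
  refine Summable.of_norm_bounded hs fun q => ?_
  rw [norm_smul, Real.norm_eq_abs, abs_of_nonneg (hc q)]
  exact mul_le_of_le_one_right (hc q) (norm_projv_basis e q)

lemma Dg_hasSum_apply (e : HilbertBasis (ℕ × ℕ) ℂ H) {c : ℕ × ℕ → ℝ} (hc : ∀ q, 0 ≤ c q)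
    (hs : Summable c) (x : H) :
    HasSum (fun q => ((c q * ‖⟪e q, x⟫‖ ^ 2 : ℝ) : ℂ)) ⟪x, Dg e c x⟫ := by
  have h1 := (summable_Dg e hc hs).hasSum
  have h2 := (h1.mapL (ContinuousLinearMap.apply ℂ H x)).mapL (innerSL ℂ x)
  refine h2.congr_fun ?_ |> fun h => h
  intro q
  simp only [innerSL_apply_apply, ContinuousLinearMap.apply_apply]
  rw [real_smul_apply, inner_smul_right, inner_projv, Complex.ofReal_mul]

lemma Dg_tc (e : HilbertBasis (ℕ × ℕ) ℂ H) {c : ℕ × ℕ → ℝ} (hc : ∀ q, 0 ≤ c q)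
    {C : ℝ} (hs : HasSum c C) : IsTC e (Dg e c) C := by
  constructor
  · rw [ContinuousLinearMap.isPositive_iff_complex]
    intro x
    have h := Dg_hasSum_apply e hc hs.summable x
    have h1 : ⟪x, Dg e c x⟫ = ((∑' q, c q * ‖⟪e q, x⟫‖ ^ 2 : ℝ) : ℂ) := by
      rw [← h.tsum_eq, Complex.ofReal_tsum]
    rw [← inner_conj_symm, h1, Complex.conj_ofReal]
    exact ⟨by rw [RCLike.re_to_complex, Complex.ofReal_re], by
      rw [RCLike.re_to_complex, Complex.ofReal_re]
      exact tsum_nonneg fun q => mul_nonneg (hc q) (by positivity)⟩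
  · refine hs.congr_fun ?_ |> fun h => h
    intro p
    have h := Dg_hasSum_apply e hc hs.summable (e p)
    have h2 := hasSum_single (f := fun q => ((c q * ‖⟪e q, e p⟫‖ ^ 2 : ℝ) : ℂ)) p
      (fun q hq => by simp [inner_basis, hq])
    rw [h.unique h2, Complex.ofReal_re]
    simp [e.orthonormal.1 p]

lemma Dg_add (e : HilbertBasis (ℕ × ℕ) ℂ H) {c d : ℕ × ℕ → ℝ} (hc : ∀ q, 0 ≤ c q)
    (hs : Summable c) (hd : ∀ q, 0 ≤ d q) (hsd : Summable d) :
    Dg e (fun q => c q + d q) = Dg e c + Dg e d := by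
  rw [Dg, Dg, Dg, ← (summable_Dg e hc hs).tsum_add (summable_Dg e hd hsd)]
  simp_rw [add_smul]

lemma pow_two_big {a c d : ℕ} (h1 : c < a) (h2 : d < a) : 2 ^ c + 2 ^ d ≤ 2 ^ a := by
  obtain ⟨k, rfl⟩ : ∃ k, a = k + 1 := ⟨a - 1, by omega⟩
  have h3 : 2 ^ c ≤ 2 ^ k := Nat.pow_le_pow_right (by norm_num) (by omega)
  have h4 : 2 ^ d ≤ 2 ^ k := Nat.pow_le_pow_right (by norm_num) (by omega)
  rw [pow_succ]; omega

lemma sidon {a b c d : ℕ} (h : 2 ^ a + 2 ^ b = 2 ^ c + 2 ^ d) :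
    (a = c ∧ b = d) ∨ (a = d ∧ b = c) := by
  have pa : 0 < 2 ^ a := by positivity
  have pb : 0 < 2 ^ b := by positivity
  have pc : 0 < 2 ^ c := by positivity
  have pd : 0 < 2 ^ d := by positivity
  have inj : ∀ x y : ℕ, 2 ^ x = 2 ^ y → x = y := fun x y h =>
    Nat.pow_right_injective (le_refl 2) h
  by_cases h1 : a = c
  · subst h1; exact Or.inl ⟨rfl, inj _ _ (by omega)⟩
  by_cases h2 : a = d
  · subst h2; exact Or.inr ⟨rfl, inj _ _ (by omega)⟩
  by_cases h3 : b = c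
  · subst h3; exact absurd (inj a d (by omega)) h2
  by_cases h4 : b = d
  · subst h4; exact absurd (inj a c (by omega)) h1
  exfalso
  have k1 : ¬ (c < a ∧ d < a) := fun hh => by have := pow_two_big hh.1 hh.2; omega
  have k2 : ¬ (c < b ∧ d < b) := fun hh => by have := pow_two_big hh.1 hh.2; omega
  have k3 : ¬ (a < c ∧ b < c) := fun hh => by have := pow_two_big hh.1 hh.2; omega
  have k4 : ¬ (a < d ∧ b < d) := fun hh => by have := pow_two_big hh.1 hh.2; omega
  omega

/-- Phase exponent of the basis vector `e q`. -/
def dexp (K : ℕ) (q : ℕ × ℕ) : ZMod K := ((2 ^ q.1 : ℕ) : ZMod K) - ((2 ^ q.2 : ℕ) : ZMod K)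

lemma dexp_eq_iff {N : ℕ} {p q : ℕ × ℕ} (hp : p ∈ Finset.range N ×ˢ Finset.range N)
    (hq : q ∈ Finset.range N ×ˢ Finset.range N) :
    dexp (2 ^ (N + 1)) p = dexp (2 ^ (N + 1)) q ↔ (p.1 = p.2 ∧ q.1 = q.2) ∨ p = q := by
  obtain ⟨n, m⟩ := p
  obtain ⟨n', m'⟩ := q
  simp only [Finset.mem_product, Finset.mem_range] at hp hq
  simp only [dexp]
  constructor
  · intro h
    rw [sub_eq_sub_iff_add_eq_add, ← Nat.cast_add, ← Nat.cast_add, ZMod.natCast_eq_natCast_iff',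
      Nat.mod_eq_of_lt, Nat.mod_eq_of_lt] at h
    · rcases sidon h with ⟨h1, h2⟩ | ⟨h1, h2⟩
      · right; rw [h1, h2]
      · left; exact ⟨h1, h2.symm⟩
    · have h1 := Nat.pow_lt_pow_right (a := 2) (by norm_num) hq.1
      have h2 := Nat.pow_lt_pow_right (a := 2) (by norm_num) hp.2
      rw [pow_succ]; omega
    · have h1 := Nat.pow_lt_pow_right (a := 2) (by norm_num) hp.1
      have h2 := Nat.pow_lt_pow_right (a := 2) (by norm_num) hq.2
      rw [pow_succ]; omega
  · rintro (⟨h1, h2⟩ | h)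
    · subst h1 h2; simp
    · simp only [Prod.mk.injEq] at h; obtain ⟨rfl, rfl⟩ := h; rfl

lemma projv_sum_apply (e : HilbertBasis (ℕ × ℕ) ℂ H) (F : Finset (ℕ × ℕ)) (c : ℕ × ℕ → ℂ)
    (x : H) : projv (∑ q ∈ F, c q • e q) x =
      ∑ p ∈ F, ∑ q ∈ F, (c p * (starRingEnd ℂ) (c q) * ⟪e q, x⟫) • e p := by
  rw [projv_apply, sum_inner, Finset.smul_sum]
  refine Finset.sum_congr rfl fun p _ => ?_
  rw [smul_smul, Finset.sum_mul, Finset.sum_smul]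
  refine Finset.sum_congr rfl fun q _ => ?_
  rw [inner_smul_left]; congr 1; ring

/-- The box of basis indices below `N`. -/
def box (N : ℕ) : Finset (ℕ × ℕ) := Finset.range N ×ˢ Finset.range N

/-- Amplitudes. -/
def amp (μ : ℕ → ℝ) (q : ℕ × ℕ) : ℝ := Real.sqrt (μ q.1) * Real.sqrt (μ q.2)

/-- Off-diagonal weights. -/
def offd (μ : ℕ → ℝ) (q : ℕ × ℕ) : ℝ := if q.1 = q.2 then 0 else μ q.1 * μ q.2

/-- Product vector with phases. -/
def phv (e : HilbertBasis (ℕ × ℕ) ℂ H) (μ : ℕ → ℝ) (N : ℕ) (k : ZMod (2 ^ (N + 1))) : H :=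
  ∑ q ∈ box N, ((amp μ q : ℂ) * ZMod.stdAddChar (k * dexp (2 ^ (N + 1)) q)) • e q

lemma psiN_eq (e : HilbertBasis (ℕ × ℕ) ℂ H) {μ : ℕ → ℝ} (hμ : ∀ n, 0 ≤ μ n) (N : ℕ) :
    ∑ n ∈ Finset.range N, ((μ n : ℝ) : ℂ) • e (n, n) =
      ∑ q ∈ box N, (if q.1 = q.2 then (amp μ q : ℂ) else 0) • e q := by
  rw [box, Finset.sum_product]
  refine Finset.sum_congr rfl fun n hn => ?_
  rw [Finset.sum_eq_single n]
  · simp [amp, -Complex.ofReal_mul, Real.mul_self_sqrt (hμ n)]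
  · intro m _ hm; simp [hm.symm]
  · intro h; exact absurd hn h

lemma average (e : HilbertBasis (ℕ × ℕ) ℂ H) {μ : ℕ → ℝ} (hμ : ∀ n, 0 ≤ μ n) (N : ℕ) :
    ∑ k : ZMod (2 ^ (N + 1)), projv (phv e μ N k) =
      ((2 ^ (N + 1) : ℕ) : ℝ) • (projv (∑ n ∈ Finset.range N, ((μ n : ℝ) : ℂ) • e (n, n)) +
        ∑ q ∈ box N, offd μ q • projv (e q)) := by
  ext x
  rw [real_smul_apply, add_apply, psiN_eq e hμ, projv_sum_apply]
  simp only [sum_apply, real_smul_apply]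
  simp only [phv, projv_sum_apply]
  rw [Finset.sum_comm, ← Finset.sum_add_distrib, Finset.smul_sum]
  refine Finset.sum_congr rfl fun p hp => ?_
  rw [Finset.sum_comm]
  have hD : (offd μ p : ℂ) • projv (e p) x = ∑ q ∈ box N,
      (if p = q then (offd μ p : ℂ) * ⟪e q, x⟫ else 0) • e p := by
    rw [Finset.sum_eq_single p]
    · simp [projv_apply, smul_smul]
    · intro q _ hq; simp [hq.symm]
    · intro h; exact absurd hp h
  rw [hD, ← Finset.sum_add_distrib, Finset.smul_sum]
  refine Finset.sum_congr rfl fun q hq => ?_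
  rw [← Finset.sum_smul, ← add_smul, smul_smul]
  congr 1
  have h1 : ∀ k : ZMod (2 ^ (N + 1)),
      (amp μ p : ℂ) * ZMod.stdAddChar (k * dexp (2 ^ (N + 1)) p) *
      (starRingEnd ℂ) ((amp μ q : ℂ) * ZMod.stdAddChar (k * dexp (2 ^ (N + 1)) q)) * ⟪e q, x⟫ =
      ((amp μ p : ℂ) * (amp μ q : ℂ) * ⟪e q, x⟫) *
        ZMod.stdAddChar (k * (dexp (2 ^ (N + 1)) p - dexp (2 ^ (N + 1)) q)) := by
    intro k
    rw [map_mul (starRingEnd ℂ), Complex.conj_ofReal, ← AddChar.map_neg_eq_conj, mul_sub, sub_eq_add_neg,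
      AddChar.map_add_eq_mul]
    ring
  simp_rw [h1]
  rw [← Finset.mul_sum, AddChar.sum_mulShift _ (ZMod.isPrimitive_stdAddChar _), ZMod.card]
  simp only [sub_eq_zero, dexp_eq_iff hp hq]
  by_cases hpq : p = q
  · subst hpq
    by_cases hd : p.1 = p.2
    · simp [hd, offd]; ring
    · have : (amp μ p : ℂ) * amp μ p = offd μ p := by
        rw [← Complex.ofReal_mul, offd, if_neg hd, amp]
        congr 1
        rw [mul_mul_mul_comm, Real.mul_self_sqrt (hμ _), Real.mul_self_sqrt (hμ _)]
      simp [hd, this]; ring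
  · by_cases hd : p.1 = p.2 <;> by_cases hd' : q.1 = q.2 <;> simp [hpq, hd, hd']
    ring

end Upper

section Conv

set_option linter.unusedSectionVars false

lemma projv_smul_real (c : ℝ) (x : H) : projv ((c : ℂ) • x) = (c ^ 2) • projv x := by
  ext y
  rw [real_smul_apply, projv_apply, projv_apply, inner_smul_left, smul_smul, smul_smul,
    Complex.conj_ofReal]
  congr 1; push_cast; ring

lemma norm_phv (e : HilbertBasis (ℕ × ℕ) ℂ H) {μ : ℕ → ℝ} (hμ : ∀ n, 0 ≤ μ n) (N : ℕ)
    (k : ZMod (2 ^ (N + 1))) : ‖phv e μ N k‖ = ∑ n ∈ Finset.range N, μ n := by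
  have h0 : 0 ≤ ∑ n ∈ Finset.range N, μ n := Finset.sum_nonneg fun n _ => hμ n
  have h : ((‖phv e μ N k‖ ^ 2 : ℝ) : ℂ) = (((∑ n ∈ Finset.range N, μ n) ^ 2 : ℝ) : ℂ) := by
    have h1 := inner_self_eq_norm_sq_to_K (𝕜 := ℂ) (phv e μ N k)
    have h2 : ((‖phv e μ N k‖ ^ 2 : ℝ) : ℂ) = ⟪phv e μ N k, phv e μ N k⟫ := by
      rw [h1]; norm_cast
    rw [h2, phv, e.orthonormal.inner_sum, sq, Finset.sum_mul_sum, box, Finset.sum_product]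
    push_cast
    refine Finset.sum_congr rfl fun n _ => Finset.sum_congr rfl fun m _ => ?_
    rw [Complex.conj_mul', norm_mul, AddChar.norm_apply, mul_one, Complex.norm_real,
      Real.norm_eq_abs, ← Complex.ofReal_pow, sq_abs, amp, mul_pow, Real.sq_sqrt (hμ _),
      Real.sq_sqrt (hμ _), Complex.ofReal_mul]
  have h' := Complex.ofReal_injective h
  exact (sq_eq_sq₀ (norm_nonneg _) h0).1 h'

lemma phv_product (e : HilbertBasis (ℕ × ℕ) ℂ H) (μ : ℕ → ℝ) (N : ℕ)
    (k : ZMod (2 ^ (N + 1))) (a : ℂ) : IsProductVec e (a • phv e μ N k) := by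
  refine ⟨fun n => if n < N then a * (Real.sqrt (μ n) : ℂ) *
      ZMod.stdAddChar (k * ((2 ^ n : ℕ) : ZMod (2 ^ (N + 1)))) else 0,
    fun m => if m < N then (Real.sqrt (μ m) : ℂ) *
      ZMod.stdAddChar (-(k * ((2 ^ m : ℕ) : ZMod (2 ^ (N + 1))))) else 0, ?_⟩
  rw [tsum_eq_sum (s := box N), phv, Finset.smul_sum]
  · refine Finset.sum_congr rfl fun q hq => ?_
    simp only [box, Finset.mem_product, Finset.mem_range] at hq
    beta_reduce
    rw [if_pos hq.1, if_pos hq.2, smul_smul, dexp, mul_sub, sub_eq_add_neg,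
      AddChar.map_add_eq_mul, amp, Complex.ofReal_mul]
    congr 1; ring
  · intro q hq
    simp only [box, Finset.mem_product, Finset.mem_range, not_and_or] at hq
    rcases hq with hq | hq <;> simp [hq]

lemma approx_mem (e : HilbertBasis (ℕ × ℕ) ℂ H) {μ : ℕ → ℝ} (hμ : ∀ n, 0 ≤ μ n) (N : ℕ)
    (hM : 0 < ∑ n ∈ Finset.range N, μ n) :
    ((∑ n ∈ Finset.range N, μ n) ^ 2)⁻¹ •
      (projv (∑ n ∈ Finset.range N, ((μ n : ℝ) : ℂ) • e (n, n)) +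
        ∑ q ∈ box N, offd μ q • projv (e q)) ∈
    convexHull ℝ {T : Op H | ∃ ψ : H, ‖ψ‖ = 1 ∧ IsProductVec e ψ ∧ T = projv ψ} := by
  set M := ∑ n ∈ Finset.range N, μ n
  have hK : (0 : ℝ) < ((2 ^ (N + 1) : ℕ) : ℝ) := by positivity
  have h := (convex_convexHull ℝ {T : Op H | ∃ ψ : H, ‖ψ‖ = 1 ∧ IsProductVec e ψ ∧
    T = projv ψ}).sum_mem (t := (Finset.univ : Finset (ZMod (2 ^ (N + 1)))))
    (w := fun _ => (((2 ^ (N + 1) : ℕ) : ℝ))⁻¹)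
    (z := fun k => projv (((M⁻¹ : ℝ) : ℂ) • phv e μ N k)) (fun _ _ => by positivity)
    (by rw [Finset.sum_const, Finset.card_univ, ZMod.card, nsmul_eq_mul,
          mul_inv_cancel₀ hK.ne'])
    (fun k _ => subset_convexHull ℝ _ ⟨_, by
      rw [norm_smul, norm_phv e hμ, Complex.norm_real, Real.norm_eq_abs,
        abs_of_pos (by positivity), inv_mul_cancel₀ hM.ne'], phv_product e μ N k _, rfl⟩)
  convert h using 1
  simp_rw [projv_smul_real]
  rw [← Finset.smul_sum, ← Finset.smul_sum, average e hμ, smul_comm _ (_ ^ 2), smul_smul (_⁻¹),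
    inv_mul_cancel₀ hK.ne', one_smul, inv_pow]

lemma projv_sub_eq (a b : H) {t : ℝ} (ht : 0 < t) :
    projv a - projv b = (1 / 4 : ℝ) • projv ((t : ℂ) • (a + b) + ((t⁻¹ : ℝ) : ℂ) • (a - b)) -
      (1 / 4 : ℝ) • projv ((t : ℂ) • (a + b) - ((t⁻¹ : ℝ) : ℂ) • (a - b)) := by
  ext x
  have h1 : (t : ℂ) ≠ 0 := by exact_mod_cast ht.ne'
  simp only [sub_apply, real_smul_apply, projv_apply, inner_add_left, inner_sub_left,
    inner_smul_left, Complex.conj_ofReal]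
  push_cast
  match_scalars
  · field_simp; ring
  · field_simp; ring

lemma projv_sub_pieces {e : HilbertBasis (ℕ × ℕ) ℂ H} (a b : H) {δ : ℝ} (hδ : 0 < δ)
    (ha : ‖a‖ ≤ 1) (hb : ‖b‖ ≤ 1) (hab : ‖a - b‖ ≤ δ) :
    ∃ P Q : Op H, ∃ s t : ℝ, projv a - projv b = P - Q ∧ IsTC e P s ∧ IsTC e Q t ∧
      s + t ≤ 3 * δ := by
  have hs : 0 < Real.sqrt δ := Real.sqrt_pos.2 hδ
  refine ⟨_, _, _, _, projv_sub_eq a b hs, (projv_tc e _).smul (by norm_num),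
    (projv_tc e _).smul (by norm_num), ?_⟩
  have hp := parallelogram_law_with_norm ℂ (((Real.sqrt δ : ℝ) : ℂ) • (a + b))
    ((((Real.sqrt δ)⁻¹ : ℝ) : ℂ) • (a - b))
  have h1 : ‖((Real.sqrt δ : ℝ) : ℂ) • (a + b)‖ * ‖((Real.sqrt δ : ℝ) : ℂ) • (a + b)‖ ≤ 4 * δ := by
    rw [norm_smul, Complex.norm_real, Real.norm_eq_abs, abs_of_pos hs, mul_mul_mul_comm,
      Real.mul_self_sqrt hδ.le]
    have : ‖a + b‖ ≤ 2 := (norm_add_le _ _).trans (by linarith)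
    nlinarith [norm_nonneg (a + b), mul_self_le_mul_self (norm_nonneg (a + b)) this]
  have h2 : ‖(((Real.sqrt δ)⁻¹ : ℝ) : ℂ) • (a - b)‖ * ‖(((Real.sqrt δ)⁻¹ : ℝ) : ℂ) • (a - b)‖
      ≤ δ := by
    rw [norm_smul, Complex.norm_real, Real.norm_eq_abs, abs_of_pos (by positivity),
      mul_mul_mul_comm, ← mul_inv, Real.mul_self_sqrt hδ.le, inv_mul_le_iff₀ hδ]
    exact mul_self_le_mul_self (norm_nonneg _) hab
  nlinarith

end Conv

section Final

set_option linter.unusedSectionVars false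

lemma offd_nonneg {μ : ℕ → ℝ} (hμ : ∀ n, 0 ≤ μ n) (q : ℕ × ℕ) : 0 ≤ offd μ q := by
  unfold offd; split_ifs
  · exact le_rfl
  · exact mul_nonneg (hμ _) (hμ _)

lemma offd_hasSum {μ : ℕ → ℝ} (hμ : ∀ n, 0 ≤ μ n) (hs : Summable μ)
    (hsq : HasSum (fun n => μ n ^ 2) 1) : HasSum (offd μ) ((∑' n, μ n) ^ 2 - 1) := by
  have h1 : HasSum (fun q : ℕ × ℕ => μ q.1 * μ q.2) ((∑' n, μ n) * (∑' n, μ n)) :=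
    hs.hasSum.mul hs.hasSum (hs.mul_of_nonneg hs hμ hμ)
  have hinj : Function.Injective (fun n : ℕ => (n, n)) := fun a b h => by simpa using h
  have h2 : HasSum (fun q : ℕ × ℕ => if q.1 = q.2 then μ q.1 * μ q.2 else 0) 1 := by
    rw [← hinj.hasSum_iff]
    · simpa [Function.comp_def, ← sq] using hsq
    · rintro ⟨a, b⟩ hq
      by_cases h : a = b
      · exact absurd ⟨a, by simp [h]⟩ hq
      · simp [h]
  have h3 := h1.sub h2
  rw [← sq] at h3
  refine h3.congr_fun ?_ |> fun h => h
  intro q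
  by_cases h : q.1 = q.2 <;> simp [offd, h]

lemma box_tendsto : Tendsto box atTop atTop := by
  refine tendsto_atTop_finset_of_monotone ?_ ?_
  · intro a b hab
    exact Finset.product_subset_product (Finset.range_mono hab) (Finset.range_mono hab)
  · intro q
    refine ⟨q.1 + q.2 + 1, ?_⟩
    simp only [box, Finset.mem_product, Finset.mem_range]; omega

lemma step_bound (e : HilbertBasis (ℕ × ℕ) ℂ H) {c : ℕ × ℕ → ℝ} (hc : ∀ q, 0 ≤ c q) {C : ℝ}
    (hC : HasSum c C) (F : Finset (ℕ × ℕ)) {a b : H} {δ α β : ℝ} (hδ : 0 < δ)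
    (ha : ‖a‖ ≤ 1) (hb : ‖b‖ ≤ 1) (hab : ‖a - b‖ ≤ δ) (hβ : 0 ≤ β) (hαβ : β ≤ α) :
    traceNorm e (α • (projv a + ∑ q ∈ F, c q • projv (e q)) - β • (projv b + Dg e c)) ≤
      (α - β) * (1 + C) + β * (3 * δ) + β * (C - ∑ q ∈ F, c q) := by
  classical
  obtain ⟨P, Q, s, t, hPQ, hP, hQ, hst⟩ := projv_sub_pieces (e := e) a b hδ ha hb hab
  set c1 : ℕ × ℕ → ℝ := fun q => if q ∈ F then c q else 0 with hc1
  set c2 : ℕ × ℕ → ℝ := fun q => if q ∈ F then 0 else c q with hc2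
  have hc1n : ∀ q, 0 ≤ c1 q := fun q => by simp only [hc1]; split_ifs <;> simp [hc]
  have hc2n : ∀ q, 0 ≤ c2 q := fun q => by simp only [hc2]; split_ifs <;> simp [hc]
  have hs1 : HasSum c1 (∑ q ∈ F, c q) := by
    have : HasSum c1 (∑ q ∈ F, c1 q) :=
      hasSum_sum_of_ne_finset_zero fun q hq => by simp [hc1, hq]
    rwa [Finset.sum_congr rfl (fun q hq => by simp [hc1, hq] : ∀ q ∈ F, c1 q = c q)] at this
  have hs2 : HasSum c2 (C - ∑ q ∈ F, c q) := by
    refine (hC.sub hs1).congr_fun ?_ |> fun h => h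
    intro q; by_cases h : q ∈ F <;> simp [hc1, hc2, h]
  have hD1 : Dg e c1 = ∑ q ∈ F, c q • projv (e q) := by
    rw [Dg, tsum_eq_sum (s := F) fun q hq => by simp [hc1, hq]]
    exact Finset.sum_congr rfl fun q hq => by simp [hc1, hq]
  have hD : Dg e c = Dg e c1 + Dg e c2 := by
    rw [← Dg_add e hc1n hs1.summable hc2n hs2.summable]
    congr 1; funext q; by_cases h : q ∈ F <;> simp [hc1, hc2, h]
  have t1 := Dg_tc e hc1n hs1
  have t2 := Dg_tc e hc2n hs2
  have hEq : α • (projv a + ∑ q ∈ F, c q • projv (e q)) - β • (projv b + Dg e c) =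
      ((α - β) • (projv a + Dg e c1) + β • P) - (β • Q + β • Dg e c2) := by
    have hPQ' : projv a = projv b + P - Q := by rw [add_sub_assoc, ← hPQ]; abel
    rw [hD, ← hD1, hPQ']
    module
  rw [hEq]
  refine (traceNorm_sub_le ((((projv_tc e a).add t1).smul (sub_nonneg.2 hαβ)).add (hP.smul hβ))
    ((hQ.smul hβ).add (t2.smul hβ))).trans ?_
  have hF : ∑ q ∈ F, c q ≤ C := sum_le_hasSum F (fun q _ => hc q) hC
  have ha2 : ‖a‖ ^ 2 ≤ 1 := by nlinarith [norm_nonneg a]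
  have k1 : (α - β) * (‖a‖ ^ 2 + ∑ q ∈ F, c q) ≤ (α - β) * (1 + C) :=
    mul_le_mul_of_nonneg_left (by linarith) (sub_nonneg.2 hαβ)
  have k2 : β * (s + t) ≤ β * (3 * δ) := mul_le_mul_of_nonneg_left hst hβ
  linarith

lemma sep_mem (e : HilbertBasis (ℕ × ℕ) ℂ H) {μ : ℕ → ℝ} (hμ : ∀ n, 0 ≤ μ n) (hs : Summable μ)
    (hsq : HasSum (fun n => μ n ^ 2) 1) {ψ : H}
    (hψ : HasSum (fun n : ℕ => ((μ n : ℝ) : ℂ) • e (n, n)) ψ) :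
    ((∑' n, μ n) ^ 2)⁻¹ • (projv ψ + Dg e (offd μ)) ∈ SepStates e := by
  obtain ⟨n0, hn0⟩ : ∃ n, 0 < μ n := by
    by_contra hcon
    push Not at hcon
    have : ∀ n, μ n = 0 := fun n => le_antisymm (hcon n) (hμ n)
    have h0 : HasSum (fun n => μ n ^ 2) 0 := by simpa [this] using hasSum_zero
    exact one_ne_zero (hsq.unique h0)
  set C := (∑' n, μ n) ^ 2 - 1
  set M := ∑' n, μ n with hMdef
  have hC := offd_hasSum hμ hs hsq
  let Nk : ℕ → ℕ := fun k => k + (n0 + 1)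
  have hNk : Tendsto Nk atTop atTop := tendsto_add_atTop_nat _
  let Mk : ℕ → ℝ := fun k => ∑ n ∈ Finset.range (Nk k), μ n
  let ψk : ℕ → H := fun k => ∑ n ∈ Finset.range (Nk k), ((μ n : ℝ) : ℂ) • e (n, n)
  have hMk0 : ∀ k, 0 < Mk k := fun k =>
    Finset.sum_pos' (fun n _ => hμ n) ⟨n0, by simp [Nk]; omega, hn0⟩
  have hMkle : ∀ k, Mk k ≤ M := fun k => hs.sum_le_tsum _ fun n _ => hμ n
  have hM0 : 0 < M := (hMk0 0).trans_le (hMkle 0)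
  have hMlim : Tendsto Mk atTop (nhds M) := hs.hasSum.tendsto_sum_nat.comp hNk
  have hψlim : Tendsto ψk atTop (nhds ψ) := hψ.tendsto_sum_nat.comp hNk
  have hψ1 : ‖ψ‖ ≤ 1 := by
    have := (norm_psi hψ).unique hsq
    nlinarith [norm_nonneg ψ]
  have hψk1 : ∀ k, ‖ψk k‖ ≤ 1 := by
    intro k
    have ho : Orthonormal ℂ (fun n : ℕ => e (n, n)) :=
      e.orthonormal.comp (fun n : ℕ => (n, n)) fun a b h => by simpa using h
    have h1 : ⟪ψk k, ψk k⟫ = ((∑ n ∈ Finset.range (Nk k), μ n ^ 2 : ℝ) : ℂ) := by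
      have := ho.inner_sum (fun n => ((μ n : ℝ) : ℂ)) (fun n => ((μ n : ℝ) : ℂ))
        (Finset.range (Nk k))
      rw [this]; push_cast
      exact Finset.sum_congr rfl fun n _ => by rw [Complex.conj_ofReal, sq]
    rw [inner_self_eq_norm_sq_to_K] at h1
    have h2 : ‖ψk k‖ ^ 2 = ∑ n ∈ Finset.range (Nk k), μ n ^ 2 := by
      apply Complex.ofReal_injective
      rw [← h1]; norm_cast
    have h3 := sum_le_hasSum (Finset.range (Nk k)) (fun n _ => sq_nonneg (μ n)) hsq
    nlinarith [norm_nonneg (ψk k)]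
  let δ : ℕ → ℝ := fun k => ‖ψk k - ψ‖ + 1 / ((k : ℝ) + 1)
  have hδlim : Tendsto δ atTop (nhds 0) := by
    have h1 : Tendsto (fun k => ‖ψk k - ψ‖) atTop (nhds 0) :=
      tendsto_iff_norm_sub_tendsto_zero.1 hψlim
    simpa [δ] using h1.add tendsto_one_div_add_atTop_nhds_zero_nat
  refine ⟨fun k => ((Mk k) ^ 2)⁻¹ • (projv (ψk k) +
    ∑ q ∈ box (Nk k), offd μ q • projv (e q)), fun k => approx_mem e hμ (Nk k) (hMk0 k), ?_⟩
  have hup : ∀ k, traceNorm e (((Mk k) ^ 2)⁻¹ • (projv (ψk k) +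
      ∑ q ∈ box (Nk k), offd μ q • projv (e q)) - (M ^ 2)⁻¹ • (projv ψ + Dg e (offd μ))) ≤
      ((Mk k ^ 2)⁻¹ - (M ^ 2)⁻¹) * (1 + C) + (M ^ 2)⁻¹ * (3 * δ k) +
        (M ^ 2)⁻¹ * (C - ∑ q ∈ box (Nk k), offd μ q) := by
    intro k
    refine step_bound e (offd_nonneg hμ) hC (box (Nk k)) (by positivity) (hψk1 k) hψ1
      (le_add_of_nonneg_right (by positivity)) (by positivity) ?_
    have := hMk0 k
    have := hMkle k
    gcongr
  refine squeeze_zero (fun k => traceNorm_nonneg e _) hup ?_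
  have l1 : Tendsto (fun k => (Mk k ^ 2)⁻¹) atTop (nhds (M ^ 2)⁻¹) :=
    (hMlim.pow 2).inv₀ (by positivity)
  have l2 : Tendsto (fun k => ∑ q ∈ box (Nk k), offd μ q) atTop (nhds C) :=
    (show Tendsto (fun F : Finset (ℕ × ℕ) => ∑ q ∈ F, offd μ q) atTop (nhds C) from hC).comp
      (box_tendsto.comp hNk)
  have l3 := (((l1.sub_const (M ^ 2)⁻¹).mul_const (1 + C)).add
    ((hδlim.const_mul 3).const_mul (M ^ 2)⁻¹)).add ((l2.const_sub C).const_mul (M ^ 2)⁻¹)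
  simpa using l3

lemma upper_bound (e : HilbertBasis (ℕ × ℕ) ℂ H) {μ : ℕ → ℝ} (hμ : ∀ n, 0 ≤ μ n)
    (hs : Summable μ) (hsq : HasSum (fun n => μ n ^ 2) 1) {ψ : H}
    (hψ : HasSum (fun n : ℕ => ((μ n : ℝ) : ℂ) • e (n, n)) ψ) :
    Robustness e (SepStates e) (projv ψ) ≤ ENNReal.ofReal ((∑' n, μ n) ^ 2) := by
  have hmem := sep_mem e hμ hs hsq hψ
  have hC := offd_hasSum hμ hs hsq
  have hC0 : 0 ≤ (∑' n, μ n) ^ 2 - 1 := hC.nonneg (offd_nonneg hμ)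
  have hTC := Dg_tc e (offd_nonneg hμ) hC
  obtain ⟨τ, hτ, hτD⟩ : ∃ τ : Op H, IsDensity e τ ∧
      ((∑' n, μ n) ^ 2 - 1) • τ = Dg e (offd μ) := by
    rcases hC0.eq_or_lt with h0 | hpos
    · refine ⟨projv ψ, IsTC.density ?_, ?_⟩
      · have := projv_tc e ψ
        rwa [(norm_psi hψ).unique hsq] at this
      · rw [← h0] at hC
        have := (hasSum_zero_iff_of_nonneg (offd_nonneg hμ)).1 hC
        rw [← h0, zero_smul, Dg, this]
        simp
    · refine ⟨((∑' n, μ n) ^ 2 - 1)⁻¹ • Dg e (offd μ), IsTC.density ?_, ?_⟩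
      · have := hTC.smul (inv_nonneg.2 hC0)
        rwa [inv_mul_cancel₀ hpos.ne'] at this
      · rw [smul_smul, mul_inv_cancel₀ hpos.ne', one_smul]
  refine sInf_le ⟨(∑' n, μ n) ^ 2 - 1, hC0, τ, hτ, ?_, ?_⟩
  · rw [hτD, add_sub_cancel]; exact hmem
  · rw [add_sub_cancel]

end Final

/-- for a pure bipartite state `|ψ⟩ = ∑ₙ μₙ |nn⟩` with Schmidt coefficients
`μₙ ≥ 0`, the generalized robustness of entanglement equals `(∑ₙ μₙ)²` (computed in `ℝ≥0∞`,
so it is finite iff the Schmidt coefficients are summable). -/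
theorem robustness_entanglement_pure (e : HilbertBasis (ℕ × ℕ) ℂ H)
    (μ : ℕ → ℝ) (hμ : ∀ n, 0 ≤ μ n) (hsq : Summable (fun n => μ n ^ 2))
    (hnorm : ∑' n : ℕ, μ n ^ 2 = 1) :
    Robustness e (SepStates e) (projv (∑' n : ℕ, ((μ n : ℝ) : ℂ) • e (n, n))) =
      (∑' n : ℕ, ENNReal.ofReal (μ n)) ^ 2 := by
  refine le_antisymm ?_ (lower_bound e μ hμ hsq)
  by_cases hs : Summable μ
  · rw [← ENNReal.ofReal_tsum_of_nonneg hμ hs, ← ENNReal.ofReal_pow (tsum_nonneg hμ)]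
    exact upper_bound e hμ hs (hnorm ▸ hsq.hasSum) (summable_psi e hsq).hasSum
  · have htop : ∑' n : ℕ, ENNReal.ofReal (μ n) = ⊤ := by
      by_contra h
      refine hs ?_
      have := ENNReal.summable_toReal h
      simpa [ENNReal.toReal_ofReal (hμ _)] using this
    rw [htop]
    simp
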